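/- arXiv:1907.07513 — 2 statements merged into one kernel-verified Lean document; each statement's English description precedes it below -/
import Mathlib

section
/- For every intolerance parameter τ with 1/2 < τ < 1, there exist a finite simple graph G = (V,E), a set A of agents with |A| = |V| partitioned into exactly 2 types, and a bijective placement p₀ : A → V such that no finite sequence of improving swaps of the swap Schelling game with parameter τ starting from p₀ ends in a swap-stable placement; in particular, the swap Schelling game with two types and τ > 1/2 is not weakly acyclic and admits an improving response cycle. -/
/-!
Attach to a small core two large cliques of anchor nodes, one occupied by agents of each type.
Anchor agents see mostly their own type, so they are content and never swap. The numbers of anchors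
joined to a core node prescribe its fraction of like neighbors up to the influence of the core, and
with many of them all these fractions lie near `1 / 2`, hence below `τ`: a core agent pays `τ` minus
its fraction, and two core agents swap exactly when this raises both fractions.

The core has an edge between the nodes `0` and `1` and two isolated nodes `2` and `3`, which suit
type `0` and type `1` respectively. The fraction at node `0` is the smallest of all when the types
at `0` and `1` differ and the largest of all when they agree, whereas the fraction at node `1`
always lies between those of suited and unsuited agents at `2` and `3`. So when the types at `0` and
`1` differ, the agent at `0` gives way to one agreeing with `1`; when they agree, the agent at `1`
trades places with an unsuited agent, and they differ again, as in matching pennies. From the types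
`1, 0, 0, 1` on the core, the only improving swaps are in turn those at the nodes `0, 2`, then
`1, 2`, then `0, 3`, then `1, 3`, which restores the initial types.
-/

open Finset
open scoped Classical

noncomputable section

namespace Schelling

variable {V A : Type*} [Fintype V] [Fintype A] {k : ℕ}

/-- The set of neighbors of agent `a` under placement `p`. -/
def nbrs (G : SimpleGraph V) (p : A → V) (a : A) : Finset A :=
  Finset.univ.filter fun b => G.Adj (p a) (p b)

/-- `|N⁺_p(a)|`: the number of neighbors of `a` under `p` having the same type as `a`. -/
def posCount (G : SimpleGraph V) (t : A → Fin k) (p : A → V) (a : A) : ℕ :=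
  (Finset.univ.filter fun b => G.Adj (p a) (p b) ∧ t b = t a).card

/-- One-versus-all `|N⁻_p(a)|`: the number of neighbors of `a` whose type differs from `t a`. -/
def negCountAll (G : SimpleGraph V) (t : A → Fin k) (p : A → V) (a : A) : ℕ :=
  (Finset.univ.filter fun b => G.Adj (p a) (p b) ∧ t b ≠ t a).card

/-- One-versus-one `|N⁻_p(a)|`: the size of a largest set of neighbors of `a`
of one common type different from `t a`. -/
def negCountOne (G : SimpleGraph V) (t : A → Fin k) (p : A → V) (a : A) : ℕ :=
  (Finset.univ.filter fun T : Fin k => T ≠ t a).sup fun T =>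
    (Finset.univ.filter fun b => G.Adj (p a) (p b) ∧ t b = T).card

/-- The cost of agent `a` in the one-versus-all version. -/
def costAll (G : SimpleGraph V) (t : A → Fin k) (τ : ℝ) (p : A → V) (a : A) : ℝ :=
  if nbrs G p a = ∅ then τ
  else max 0 (τ - (posCount G t p a : ℝ) /
    ((posCount G t p a : ℝ) + (negCountAll G t p a : ℝ)))

/-- The cost of agent `a` in the one-versus-one version. -/
def costOne (G : SimpleGraph V) (t : A → Fin k) (τ : ℝ) (p : A → V) (a : A) : ℝ :=
  if nbrs G p a = ∅ then τ
  else max 0 (τ - (posCount G t p a : ℝ) /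
    ((posCount G t p a : ℝ) + (negCountOne G t p a : ℝ)))

/-- A swap of the (distinct) agents `a` and `b` turning placement `p` into `q`,
which strictly decreases the cost of both agents (cost function `c`). -/
def SwapMove (c : (A → V) → A → ℝ) (p q : A → V) (a b : A) : Prop :=
  a ≠ b ∧ q = p ∘ (Equiv.swap a b) ∧ c q a < c p a ∧ c q b < c p b

/-- `q` is obtained from `p` by an improving swap. -/
def ImprovingSwap (c : (A → V) → A → ℝ) (p q : A → V) : Prop :=
  ∃ a b, SwapMove c p q a b

/-- A placement is swap-stable if it admits no improving swap. -/
def SwapStable (c : (A → V) → A → ℝ) (p : A → V) : Prop :=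
  ∀ q, ¬ ImprovingSwap c p q

/-- Some finite sequence of improving swaps starting at `p₀` ends in a swap-stable placement. -/
def ReachesStableSwap (c : (A → V) → A → ℝ) (p₀ : A → V) : Prop :=
  ∃ (n : ℕ) (q : ℕ → A → V), q 0 = p₀ ∧
    (∀ i < n, ImprovingSwap c (q i) (q (i + 1))) ∧ SwapStable c (q n)

/-- A jump of agent `a` to the node `v` (unoccupied under `p`) turning placement `p`
into `q`, which strictly decreases the cost of `a` (cost function `c`). -/
def JumpMove (c : (A → V) → A → ℝ) (p q : A → V) (a : A) (v : V) : Prop :=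
  (∀ b, p b ≠ v) ∧ q = Function.update p a v ∧ c q a < c p a

/-- `q` is obtained from `p` by an improving jump. -/
def ImprovingJump (c : (A → V) → A → ℝ) (p q : A → V) : Prop :=
  ∃ a v, JumpMove c p q a v

/-- A placement is jump-stable if it admits no improving jump. -/
def JumpStable (c : (A → V) → A → ℝ) (p : A → V) : Prop :=
  ∀ q, ¬ ImprovingJump c p q

/-- Some finite sequence of improving jumps starting at `p₀` ends in a jump-stable placement. -/
def ReachesStableJump (c : (A → V) → A → ℝ) (p₀ : A → V) : Prop :=
  ∃ (n : ℕ) (q : ℕ → A → V), q 0 = p₀ ∧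
    (∀ i < n, ImprovingJump c (q i) (q (i + 1))) ∧ JumpStable c (q n)

/-- The placement cost: the number of discontent agents (one-versus-all cost). -/
def placementCost (G : SimpleGraph V) (t : A → Fin k) (τ : ℝ) (p : A → V) : ℕ :=
  (Finset.univ.filter fun a => costAll G t τ p a ≠ 0).card

/-- A graph is `Δ`-regular if every node has exactly `Δ` neighbors. -/
def IsRegular (G : SimpleGraph V) (Δ : ℕ) : Prop :=
  ∀ v : V, (Finset.univ.filter fun u => G.Adj v u).card = Δ

section SwapTrap

variable {B W : Type*}

/-- A set of placements that improving swaps cannot leave and that contains no swap-stable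
placement. -/
structure IsSwapTrap (c : (B → W) → B → ℝ) (S : Set (B → W)) : Prop where
  mem_of_improvingSwap : ∀ p ∈ S, ∀ q, ImprovingSwap c p q → q ∈ S
  exists_improvingSwap : ∀ p ∈ S, ∃ q, ImprovingSwap c p q

variable {c : (B → W) → B → ℝ} {S : Set (B → W)} {p : B → W}

theorem IsSwapTrap.not_reachesStableSwap (hS : IsSwapTrap c S) (hp : p ∈ S) :
    ¬ ReachesStableSwap c p := by
  rintro ⟨n, q, rfl, hstep, hstable⟩
  have hmem : ∀ i ≤ n, q i ∈ S := fun i ↦ by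
    induction i with
    | zero => exact fun _ ↦ hp
    | succ i ih =>
      exact fun hi ↦ hS.mem_of_improvingSwap _ (ih (Nat.le_of_succ_le hi)) _ (hstep i hi)
  obtain ⟨r, hr⟩ := hS.exists_improvingSwap _ (hmem n le_rfl)
  exact hstable r hr

theorem exists_isPeriodicPt {α : Type*} [Finite α] [Nonempty α] (f : α → α) :
    ∃ x, ∃ n > 0, Function.IsPeriodicPt f n x := by
  obtain ⟨x⟩ := ‹Nonempty α›
  obtain ⟨i, j, hne, heq⟩ := Finite.exists_ne_map_eq_of_infinite fun i : ℕ ↦ f^[i] x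
  wlog hij : i < j generalizing i j
  · exact this j i hne.symm heq.symm (hne.lt_or_gt.resolve_left hij)
  refine ⟨f^[i] x, j - i, Nat.sub_pos_of_lt hij, ?_⟩
  rw [Function.IsPeriodicPt, Function.IsFixedPt, ← Function.iterate_add_apply,
    Nat.sub_add_cancel hij.le]
  exact heq.symm

theorem IsSwapTrap.exists_improvingResponseCycle [Finite B] [Finite W] (hS : IsSwapTrap c S)
    (hne : S.Nonempty) :
    ∃ (ℓ : ℕ) (q : ℕ → B → W), 1 ≤ ℓ ∧ q 0 ∈ S ∧ q ℓ = q 0 ∧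
      ∀ i < ℓ, ImprovingSwap c (q i) (q (i + 1)) := by
  have := hne.to_subtype
  have hsucc : ∀ p : S, ∃ q : S, ImprovingSwap c p q := fun p ↦
    let ⟨q, hq⟩ := hS.exists_improvingSwap p p.2
    ⟨⟨q, hS.mem_of_improvingSwap p p.2 q hq⟩, hq⟩
  choose f hf using hsucc
  obtain ⟨p, ℓ, hℓ, hp⟩ := exists_isPeriodicPt f
  refine ⟨ℓ, fun i ↦ f^[i] p, hℓ, p.2, congrArg Subtype.val hp, fun i _ ↦ ?_⟩
  simpa only [Function.iterate_succ_apply'] using hf (f^[i] p)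

end SwapTrap

section Cost

variable {B W W' : Type*} [Fintype B]

theorem improvingSwap_costAll_comap_iff {f : W → W'} (hf : Function.Injective f)
    (G : SimpleGraph W') (t : B → Fin k) (τ : ℝ) (p q : B → W) :
    ImprovingSwap (costAll (G.comap f) t τ) p q ↔
      ImprovingSwap (costAll G t τ) (f ∘ p) (f ∘ q) := by
  have hq (a b : B) : q = p ∘ Equiv.swap a b ↔ f ∘ q = (f ∘ p) ∘ Equiv.swap a b :=
    (hf.comp_left (α := B)).eq_iff.symm
  exact exists₂_congr fun a b ↦ and_congr_right' (and_congr_left' (hq a b))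

theorem IsSwapTrap.comap {G : SimpleGraph W'} {t : B → Fin k} {τ : ℝ} {S : Set (B → W')}
    (hS : IsSwapTrap (costAll G t τ) S) (e : W ≃ W') :
    IsSwapTrap (costAll (G.comap e) t τ) ((e ∘ ·) ⁻¹' S) where
  mem_of_improvingSwap _ hp _ hpq := hS.mem_of_improvingSwap _ hp _ <|
    (improvingSwap_costAll_comap_iff e.injective G t τ _ _).1 hpq
  exists_improvingSwap p hp := by
    obtain ⟨q, hq⟩ := hS.exists_improvingSwap _ hp
    refine ⟨e.symm ∘ q, (improvingSwap_costAll_comap_iff e.injective G t τ _ _).2 ?_⟩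
    rwa [← Function.comp_assoc, e.self_comp_symm, Function.id_comp]

/-- The fraction of like agents among the neighbors of `a` under the placement `p`; it is `0` if
`a` has no neighbors. -/
def likeFraction (G : SimpleGraph W) (t : B → Fin k) (p : B → W) (a : B) : ℝ :=
  posCount G t p a / #(nbrs G p a)

theorem posCount_add_negCountAll (G : SimpleGraph W) (t : B → Fin k) (p : B → W) (a : B) :
    posCount G t p a + negCountAll G t p a = #(nbrs G p a) := by
  simp only [posCount, negCountAll, nbrs, ← filter_filter]
  exact card_filter_add_card_filter_not _

theorem costAll_eq_max {τ : ℝ} (hτ : 0 ≤ τ) (G : SimpleGraph W) (t : B → Fin k) (p : B → W)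
    (a : B) : costAll G t τ p a = max 0 (τ - likeFraction G t p a) := by
  rw [costAll, likeFraction, ← posCount_add_negCountAll G t]
  split_ifs with h
  · have hcount : posCount G t p a + negCountAll G t p a = 0 := by
      rw [posCount_add_negCountAll, h, card_empty]
    simp [hcount, hτ]
  · rw [Nat.cast_add]

variable {G : SimpleGraph W} {t : B → Fin k} {τ : ℝ} {p : B → W} {a : B}

theorem costAll_nonneg (hτ : 0 ≤ τ) : 0 ≤ costAll G t τ p a :=
  costAll_eq_max hτ G t p a ▸ le_max_left _ _

theorem costAll_eq_zero (hτ : 0 ≤ τ) (h : τ ≤ likeFraction G t p a) :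
    costAll G t τ p a = 0 := by
  rw [costAll_eq_max hτ, max_eq_left (sub_nonpos.2 h)]

theorem costAll_eq_sub (hτ : 0 ≤ τ) (h : likeFraction G t p a ≤ τ) :
    costAll G t τ p a = τ - likeFraction G t p a := by
  rw [costAll_eq_max hτ, max_eq_right (sub_nonneg.2 h)]

end Cost

section Coloring

variable {B W : Type*}

/-- The bijective placements under which the types `t` of the agents color the nodes by a member of
`C`. -/
def placementsColoring (t : B → Fin k) (C : Set (W → Fin k)) : Set (B → W) :=
  {p | p.Bijective ∧ ∃ c ∈ C, c ∘ p = t}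

theorem comp_swap_comp_swap [DecidableEq W] {p : B → W} (hp : p.Injective) (c : W → Fin k)
    (a b : B) :
    (c ∘ Equiv.swap (p a) (p b)) ∘ (p ∘ Equiv.swap a b) = c ∘ p := by
  rw [← hp.swap_comp]
  ext x
  simp

variable [Fintype B] [Fintype W]

theorem costAll_comp {p : B → W} (hp : p.Bijective) (G : SimpleGraph W) (c : W → Fin k) (τ : ℝ)
    (a : B) : costAll G (c ∘ p) τ p a = costAll G c τ id (p a) := by
  have hnbrs : nbrs G p a = ∅ ↔ nbrs G id (p a) = ∅ := by
    simp [nbrs, filter_eq_empty_iff, hp.surjective.forall]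
  have hpos : posCount G (c ∘ p) p a = posCount G c id (p a) :=
    card_bijective p hp (by simp)
  have hneg : negCountAll G (c ∘ p) p a = negCountAll G c id (p a) :=
    card_bijective p hp (by simp)
  simp only [costAll, hnbrs, hpos, hneg]

/-- Exchanging the agents at the nodes `u` and `v` is an improving swap when `c` is the map sending
each node to the type of the agent placed there. Agents of the same type being interchangeable, the
game depends only on `c`; each node is taken as the name of its agent, which makes the placement
the identity. -/
def ImprovingColorSwap [DecidableEq W] (G : SimpleGraph W) (τ : ℝ) (c : W → Fin k) (u v : W) :
    Prop :=
  u ≠ v ∧ costAll G (c ∘ Equiv.swap u v) τ id v < costAll G c τ id u ∧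
    costAll G (c ∘ Equiv.swap u v) τ id u < costAll G c τ id v

variable [DecidableEq W] {G : SimpleGraph W} {τ : ℝ}

theorem swapMove_iff {p : B → W} (hp : p.Bijective) (c : W → Fin k) (a b : B) :
    SwapMove (costAll G (c ∘ p) τ) p (p ∘ Equiv.swap a b) a b ↔
      ImprovingColorSwap G τ c (p a) (p b) := by
  have hcost (x : B) : costAll G (c ∘ p) τ (p ∘ Equiv.swap a b) x =
      costAll G (c ∘ Equiv.swap (p a) (p b)) τ id (p (Equiv.swap a b x)) := by
    rw [← comp_swap_comp_swap hp.injective c a b,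
      costAll_comp (hp.comp (Equiv.swap a b).bijective), Function.comp_apply]
  simp [SwapMove, ImprovingColorSwap, hcost, costAll_comp hp, hp.injective.ne_iff]

theorem ImprovingColorSwap.costAll_pos {c : W → Fin k} {u v : W} (hτ : 0 ≤ τ)
    (h : ImprovingColorSwap G τ c u v) :
    0 < costAll G c τ id u ∧ 0 < costAll G c τ id v :=
  ⟨(costAll_nonneg hτ).trans_lt h.2.1, (costAll_nonneg hτ).trans_lt h.2.2⟩

theorem isSwapTrap_of_colorings {t : B → Fin k} {C : Set (W → Fin k)}
    (hclosed : ∀ c ∈ C, ∀ u v, ImprovingColorSwap G τ c u v → c ∘ Equiv.swap u v ∈ C)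
    (hmove : ∀ c ∈ C, ∃ u v, ImprovingColorSwap G τ c u v) :
    IsSwapTrap (costAll G t τ) (placementsColoring t C) where
  mem_of_improvingSwap := by
    rintro p ⟨hp, c, hc, rfl⟩ q ⟨a, b, hab⟩
    obtain rfl := hab.2.1
    exact ⟨hp.comp (Equiv.swap a b).bijective, _,
      hclosed c hc _ _ ((swapMove_iff hp c a b).1 hab), comp_swap_comp_swap hp.injective c a b⟩
  exists_improvingSwap := by
    rintro p ⟨hp, c, hc, rfl⟩
    obtain ⟨u, v, huv⟩ := hmove c hc
    obtain ⟨a, rfl⟩ := hp.surjective u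
    obtain ⟨b, rfl⟩ := hp.surjective v
    exact ⟨_, a, b, (swapMove_iff hp c a b).2 huv⟩

end Coloring

section Anchored

variable {I : Type*}

/-- The graph `H` (the core) together with, for each type `x`, a clique of `m + 1` anchor nodes,
meant to be occupied by agents of type `x`, the first `w x i` of which are joined to the core node
`i`. -/
def anchoredGraph (H : SimpleGraph I) (w : Fin k → I → ℕ) (m : ℕ) :
    SimpleGraph (I ⊕ Fin k × Fin (m + 1)) where
  Adj
    | .inl i, .inl j => H.Adj i j
    | .inl i, .inr (x, r) => r < w x i
    | .inr (x, r), .inl i => r < w x i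
    | .inr (x, r), .inr (y, s) => x = y ∧ r ≠ s
  symm := ⟨by
    rintro (i | ⟨x, r⟩) (j | ⟨y, s⟩) h
    exacts [h.symm, h, h, ⟨h.1.symm, h.2.symm⟩]⟩
  loopless := ⟨by
    rintro (i | ⟨x, r⟩) h
    exacts [H.loopless.irrefl i h, h.2 rfl]⟩

/-- The coloring of `anchoredGraph H w m` that extends the coloring `s` of the core by the
prescribed types of the anchor nodes. -/
def anchoredColoring (m : ℕ) (s : I → Fin k) : I ⊕ Fin k × Fin (m + 1) → Fin k :=
  Sum.elim s Prod.fst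

section Simp

variable {H : SimpleGraph I} {w : Fin k → I → ℕ} {m : ℕ} {s : I → Fin k} {i j : I}
  {a b : Fin k × Fin (m + 1)}

@[simp] theorem anchoredGraph_adj_inl_inl :
    (anchoredGraph H w m).Adj (.inl i) (.inl j) ↔ H.Adj i j := Iff.rfl

@[simp] theorem anchoredGraph_adj_inl_inr :
    (anchoredGraph H w m).Adj (.inl i) (.inr a) ↔ a.2 < w a.1 i := Iff.rfl

@[simp] theorem anchoredGraph_adj_inr_inr :
    (anchoredGraph H w m).Adj (.inr a) (.inr b) ↔ a.1 = b.1 ∧ a.2 ≠ b.2 := Iff.rfl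

@[simp] theorem anchoredColoring_inl : anchoredColoring m s (.inl i) = s i := rfl

@[simp] theorem anchoredColoring_inr : anchoredColoring m s (.inr a) = a.1 := rfl

end Simp

theorem anchoredColoring_surjective (m : ℕ) (s : I → Fin k) :
    (anchoredColoring m s).Surjective :=
  fun x ↦ ⟨.inr (x, 0), rfl⟩

theorem anchoredColoring_comp_swap [DecidableEq I] (m : ℕ) (s : I → Fin k) (i j : I) :
    anchoredColoring m s ∘ Equiv.swap (.inl i) (.inl j) =
      anchoredColoring m (s ∘ Equiv.swap i j) := by
  funext v
  rcases v with v | v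
  · simp [Sum.inl_injective.swap_apply]
  · simp [Equiv.swap_apply_of_ne_of_ne]

theorem card_filter_sum_prod {α β γ : Type*} [Fintype α] [Fintype β] [Fintype γ]
    (P : α ⊕ β × γ → Prop) [DecidablePred P] :
    #{v | P v} = #{i | P (.inl i)} + ∑ x, #{r | P (.inr (x, r))} := by
  simp only [card_filter, Fintype.sum_sum_type, Fintype.sum_prod_type]

variable [Fintype I] {H : SimpleGraph I} {w : Fin k → I → ℕ} {m : ℕ}

theorem posCount_core {i : I} (hw : ∀ x, w x i ≤ m + 1) (s : I → Fin k) :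
    posCount (anchoredGraph H w m) (anchoredColoring m s) id (.inl i) =
      posCount H s id i + w (s i) i := by
  have hanchors (x : Fin k) : #{r : Fin (m + 1) | (r : ℕ) < w x i ∧ x = s i} =
      if x = s i then w x i else 0 := by
    split_ifs with hx <;> simp [hx, Fin.card_filter_val_lt, hw]
  rw [posCount, card_filter_sum_prod, posCount]
  simp [hanchors]

theorem card_nbrs_core {i : I} (hw : ∀ x, w x i ≤ m + 1) :
    #(nbrs (anchoredGraph H w m) id (.inl i)) = #(nbrs H id i) + ∑ x, w x i := by
  simp [nbrs, card_filter_sum_prod, Fin.card_filter_val_lt, hw]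

theorem likeFraction_core {i : I} (hw : ∀ x, w x i ≤ m + 1) (s : I → Fin k) :
    likeFraction (anchoredGraph H w m) (anchoredColoring m s) id (.inl i) =
      (posCount H s id i + w (s i) i : ℕ) / (#(nbrs H id i) + ∑ x, w x i : ℕ) := by
  rw [likeFraction, posCount_core hw, card_nbrs_core hw]

theorem le_posCount_anchor (s : I → Fin k) (a : Fin k × Fin (m + 1)) :
    m ≤ posCount (anchoredGraph H w m) (anchoredColoring m s) id (.inr a) := calc
  m = #(univ.erase a.2) := by simp
  _ ≤ _ := card_le_card_of_injOn (fun r ↦ .inr (a.1, r)) (fun r hr ↦ by simpa [eq_comm] using hr)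
    (fun r _ r' _ h ↦ by simpa using h)

theorem negCountAll_anchor_le (s : I → Fin k) (a : Fin k × Fin (m + 1)) :
    negCountAll (anchoredGraph H w m) (anchoredColoring m s) id (.inr a) ≤ Fintype.card I := by
  rw [← card_univ, ← card_map (.inl : I ↪ I ⊕ Fin k × Fin (m + 1))]
  refine card_le_card fun v hv ↦ ?_
  rcases v with i | b
  · simp
  · obtain ⟨hadj, hne⟩ := (mem_filter.1 hv).2
    exact absurd (anchoredGraph_adj_inr_inr.1 hadj).1.symm hne

theorem costAll_anchor {τ : ℝ} (hτ : 0 ≤ τ) (hm : Fintype.card I * τ < m * (1 - τ))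
    (s : I → Fin k) (a : Fin k × Fin (m + 1)) :
    costAll (anchoredGraph H w m) (anchoredColoring m s) τ id (.inr a) = 0 := by
  refine costAll_eq_zero hτ ?_
  rw [likeFraction, ← posCount_add_negCountAll _ (anchoredColoring m s), Nat.cast_add]
  set P := posCount (anchoredGraph H w m) (anchoredColoring m s) id (.inr a)
  set Q := negCountAll (anchoredGraph H w m) (anchoredColoring m s) id (.inr a)
  have hP : (m : ℝ) ≤ P := mod_cast le_posCount_anchor s a
  have hQ : (Q : ℝ) ≤ Fintype.card I := mod_cast negCountAll_anchor_le s a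
  have hpos : 0 < m * (1 - τ) := (by positivity : 0 ≤ Fintype.card I * τ).trans_lt hm
  have hm0 : (0 : ℝ) < m := (Nat.cast_nonneg m).lt_of_ne' (left_ne_zero_of_mul hpos.ne')
  have hτ1 : 0 < 1 - τ := pos_of_mul_pos_right hpos hm0.le
  have hP0 : (0 : ℝ) < P := hm0.trans_le hP
  have hbalance : Q * τ ≤ P * (1 - τ) := calc
    Q * τ ≤ Fintype.card I * τ := by gcongr
    _ ≤ m * (1 - τ) := hm.le
    _ ≤ P * (1 - τ) := by gcongr
  rw [le_div_iff₀ (by positivity)]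
  linarith

end Anchored

section MatchingPennies

/-- The number of anchor neighbors of type `x` of the core node `i`. Node `2` prefers type `0` and
node `3` prefers type `1`. Nodes `0` and `1` are balanced, node `1` having more anchor neighbors so
that the neighbor in the core affects it less. -/
def anchorCount (n : ℕ) : Fin 2 → Fin 4 → ℕ :=
  ![![n, n + 2, n + 2, n + 1], ![n, n + 2, n + 1, n + 2]]

/-- The anchored graph on which the agents at the nodes `0` and `1` play matching pennies. -/
def penniesGraph (n m : ℕ) : SimpleGraph (Fin 4 ⊕ Fin 2 × Fin (m + 1)) :=
  anchoredGraph (SimpleGraph.edge 0 1) (anchorCount n) m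

/-- The possible fractions of like neighbors at a core node of `penniesGraph n m`, in increasing
order: the outermost two occur at node `0`, the next two at the nodes `2` and `3`, the innermost
two at node `1`. -/
def fractionLevel (n : ℕ) : Fin 6 → ℝ :=
  ![n / (2 * n + 1), (n + 1) / (2 * n + 3), (n + 2) / (2 * n + 5),
    (n + 3) / (2 * n + 5), (n + 2) / (2 * n + 3), (n + 1) / (2 * n + 1)]

/-- The index in `fractionLevel` of the fraction of like neighbors of the agent at a core node of
`penniesGraph n m` when the core is colored by `s`. -/
def fractionRank (s : Fin 4 → Fin 2) : Fin 4 → Fin 6 :=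
  ![if s 0 = s 1 then 5 else 0, if s 0 = s 1 then 3 else 2,
    if s 2 = 0 then 4 else 1, if s 3 = 1 then 4 else 1]

theorem anchorCount_le (n : ℕ) (x : Fin 2) (i : Fin 4) : anchorCount n x i ≤ n + 2 := by
  fin_cases x <;> fin_cases i <;> simp [anchorCount]

theorem fractionLevel_strictMono (n : ℕ) : StrictMono (fractionLevel n) := by
  rw [Fin.strictMono_iff_lt_succ]
  intro i
  fin_cases i <;> change (_ : ℝ) / _ < _ / _ <;>
    rw [div_lt_div_iff₀ (by positivity) (by positivity)] <;> nlinarith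

theorem likeFraction_penniesGraph {n m : ℕ} (hnm : n + 2 ≤ m + 1) (s : Fin 4 → Fin 2)
    (i : Fin 4) :
    likeFraction (penniesGraph n m) (anchoredColoring m s) id (.inl i) =
      fractionLevel n (fractionRank s i) := by
  have hw (x : Fin 2) : anchorCount n x i ≤ m + 1 := (anchorCount_le n x i).trans hnm
  have htype (x : Fin 2) : x = 0 ∨ x = 1 := by decide +revert
  rw [penniesGraph, likeFraction_core hw]
  simp only [posCount, nbrs, card_filter, Fin.sum_univ_four, Fin.sum_univ_two, SimpleGraph.edge_adj,
    id_eq]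
  fin_cases i
  · rcases htype (s 0) with h0 | h0 <;> rcases htype (s 1) with h1 | h1 <;>
      simp [h0, h1, fractionLevel, fractionRank, anchorCount] <;> ring_nf
  · rcases htype (s 0) with h0 | h0 <;> rcases htype (s 1) with h1 | h1 <;>
      simp [h0, h1, fractionLevel, fractionRank, anchorCount] <;> ring_nf
  · rcases htype (s 2) with h2 | h2 <;>
      simp [h2, fractionLevel, fractionRank, anchorCount] <;> ring_nf
  · rcases htype (s 3) with h3 | h3 <;>
      simp [h3, fractionLevel, fractionRank, anchorCount] <;> ring_nf

/-- The colorings of the core through which the game on `penniesGraph n m` cycles. -/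
def penniesColorings : Finset (Fin 4 → Fin 2) :=
  {![1, 0, 0, 1], ![0, 0, 1, 1], ![0, 1, 0, 1], ![1, 1, 0, 0]}

theorem comp_swap_mem_penniesColorings : ∀ s ∈ penniesColorings, ∀ i j,
    fractionRank s i < fractionRank (s ∘ Equiv.swap i j) j →
    fractionRank s j < fractionRank (s ∘ Equiv.swap i j) i →
    s ∘ Equiv.swap i j ∈ penniesColorings := by
  decide

theorem exists_fractionRank_lt_comp_swap : ∀ s ∈ penniesColorings, ∃ i j, i ≠ j ∧
    fractionRank s i < fractionRank (s ∘ Equiv.swap i j) j ∧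
    fractionRank s j < fractionRank (s ∘ Equiv.swap i j) i := by
  decide

variable {n m : ℕ} {τ : ℝ}

theorem costAll_penniesGraph_core (hτ : 0 ≤ τ) (hn : fractionLevel n 5 ≤ τ) (hnm : n + 2 ≤ m + 1)
    (s : Fin 4 → Fin 2) (i : Fin 4) :
    costAll (penniesGraph n m) (anchoredColoring m s) τ id (.inl i) =
      τ - fractionLevel n (fractionRank s i) := by
  have hle : fractionLevel n (fractionRank s i) ≤ τ :=
    ((fractionLevel_strictMono n).monotone (Fin.le_last _)).trans hn
  rw [← likeFraction_penniesGraph hnm] at hle ⊢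
  exact costAll_eq_sub hτ hle

theorem improvingColorSwap_penniesGraph_core_iff (hτ : 0 ≤ τ) (hn : fractionLevel n 5 ≤ τ)
    (hnm : n + 2 ≤ m + 1) (s : Fin 4 → Fin 2) (i j : Fin 4) :
    ImprovingColorSwap (penniesGraph n m) τ (anchoredColoring m s) (.inl i) (.inl j) ↔ i ≠ j ∧
      fractionRank s i < fractionRank (s ∘ Equiv.swap i j) j ∧
      fractionRank s j < fractionRank (s ∘ Equiv.swap i j) i := by
  simp only [ImprovingColorSwap, anchoredColoring_comp_swap, costAll_penniesGraph_core hτ hn hnm,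
    sub_lt_sub_iff_left, (fractionLevel_strictMono n).lt_iff_lt, Sum.inl_injective.ne_iff]

theorem isSwapTrap_penniesGraph {B : Type*} [Fintype B] (hτ : 0 ≤ τ) (hn : fractionLevel n 5 ≤ τ)
    (hnm : n + 2 ≤ m + 1) (hm : 4 * τ < m * (1 - τ)) (t : B → Fin 2) :
    IsSwapTrap (costAll (penniesGraph n m) t τ)
      (placementsColoring t (anchoredColoring m '' penniesColorings)) := by
  have hcore := improvingColorSwap_penniesGraph_core_iff hτ hn hnm
  have hanchor (s : Fin 4 → Fin 2) (a : Fin 2 × Fin (m + 1)) :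
      costAll (penniesGraph n m) (anchoredColoring m s) τ id (.inr a) = 0 :=
    costAll_anchor hτ (by simpa using hm) s a
  refine isSwapTrap_of_colorings ?_ ?_
  · rintro _ ⟨s, hs, rfl⟩ (i | a) (j | b) hswap
    · rw [anchoredColoring_comp_swap]
      obtain ⟨-, hi, hj⟩ := (hcore s i j).1 hswap
      exact ⟨_, comp_swap_mem_penniesColorings s hs i j hi hj, rfl⟩
    · exact absurd (hanchor s b) (hswap.costAll_pos hτ).2.ne'
    all_goals exact absurd (hanchor s a) (hswap.costAll_pos hτ).1.ne'
  · rintro _ ⟨s, hs, rfl⟩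
    obtain ⟨i, j, hij⟩ := exists_fractionRank_lt_comp_swap s hs
    exact ⟨.inl i, .inl j, (hcore s i j).2 hij⟩

theorem exists_fractionLevel_le (hτ : 1 / 2 < τ) : ∃ n, fractionLevel n 5 ≤ τ := by
  obtain ⟨n, hn⟩ := exists_nat_gt ((1 - τ) / (2 * τ - 1))
  refine ⟨n, ?_⟩
  rw [div_lt_iff₀ (by linarith)] at hn
  change ((n : ℝ) + 1) / (2 * n + 1) ≤ τ
  rw [div_le_iff₀ (by positivity)]
  linarith

theorem exists_cliqueSize (hτ : τ < 1) (n : ℕ) :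
    ∃ m : ℕ, n + 2 ≤ m + 1 ∧ 4 * τ < m * (1 - τ) := by
  obtain ⟨m, hm⟩ := exists_nat_gt (4 * τ / (1 - τ))
  have hτ1 : 0 < 1 - τ := sub_pos.2 hτ
  rw [div_lt_iff₀ hτ1] at hm
  refine ⟨max m (n + 1), Nat.succ_le_succ (le_max_right _ _), hm.trans_le ?_⟩
  gcongr
  exact le_max_left _ _

end MatchingPennies

/-- For every `1/2 < τ < 1` there are a graph, two surjectively used agent types on
`|A| = |V|` agents and a bijective placement `p₀` from which no finite sequence of
improving swaps of the SSG reaches a swap-stable placement (so the two-type SSG is not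
weakly acyclic); moreover an improving response cycle exists. -/
theorem statement0 (τ : ℝ) (hτ1 : 1 / 2 < τ) (hτ2 : τ < 1) :
    ∃ (N : ℕ) (G : SimpleGraph (Fin N)) (t : Fin N → Fin 2) (p₀ : Fin N → Fin N),
      Function.Surjective t ∧ Function.Bijective p₀ ∧
      (¬ ReachesStableSwap (costAll G t τ) p₀) ∧
      (∃ (ℓ : ℕ) (q : ℕ → Fin N → Fin N), 1 ≤ ℓ ∧ Function.Bijective (q 0) ∧ q ℓ = q 0 ∧
        ∀ i < ℓ, ImprovingSwap (costAll G t τ) (q i) (q (i + 1))) := by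
  obtain ⟨n, hn⟩ := exists_fractionLevel_le hτ1
  obtain ⟨m, hnm, hm⟩ := exists_cliqueSize hτ2 n
  let e := (Fintype.equivFin (Fin 4 ⊕ Fin 2 × Fin (m + 1))).symm
  let c₀ : Fin 4 ⊕ Fin 2 × Fin (m + 1) → Fin 2 := anchoredColoring m ![1, 0, 0, 1]
  have htrap := (isSwapTrap_penniesGraph (by linarith) hn hnm hm (c₀ ∘ e)).comap e
  have hmem : id ∈ (e ∘ ·) ⁻¹'
      placementsColoring (c₀ ∘ e) (anchoredColoring m '' penniesColorings) :=
    ⟨e.bijective, c₀, ⟨_, by decide, rfl⟩, rfl⟩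
  obtain ⟨ℓ, q, hℓ, hq0, hcycle⟩ := htrap.exists_improvingResponseCycle ⟨id, hmem⟩
  exact ⟨_, (penniesGraph n m).comap e, c₀ ∘ e, id,
    (anchoredColoring_surjective m _).comp e.surjective, Function.bijective_id,
    htrap.not_reachesStableSwap hmem, ℓ, q, hℓ, (e.comp_bijective _).1 hq0.1, hcycle⟩

end Schelling
end
end

section
/- For every intolerance parameter τ ∈ (0,1), there exist a finite simple graph G = (V,E), a set A of agents with |A| = |V| partitioned into three types, and a bijective placement p₀ : A → V such that no finite sequence of improving swaps of the one-versus-one swap Schelling game (1-1-SSG) with parameter τ starting from p₀ ends in a swap-stable placement; in particular, the 1-1-SSG is not weakly acyclic on arbitrary networks for any τ ∈ (0,1). -/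
/-!
Fix a large `b`. Six mobile agents of types `1` and `2`, arranged in three pairs, live on a graph
whose remaining nodes form three cliques, one per type, so large that their members are always
content. Through static neighbors, a mobile node of weight `w` sees `w * b` agents of type `0` and
`f` agents of each of the types `1` and `2`, and it has one mobile neighbor, its mate. As type `0`
is always the largest foreign group, the cost there is decreasing in the score `(f + δ) / w`, where
`δ = 1` if the mate has the same type and `δ = 0` otherwise. In pair `i` the outer node has the
score `i + δ` and the inner node the score `i + (1 + δ) / 3`, so

* the scores of pair `i` lie in `[i, i + 1]`, whence no improving swap leaves a pair, and every pair
  keeps one agent of each of the types `1` and `2`;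
* the pair `i` has an improving swap as soon as the agent on its outer node has `δ = 0`.

The mate of the outer node of pair `i` is the inner node of pair `i - 1`. If `δ = 1` on all three
outer nodes, then the types on the outer nodes properly two-color a triangle, which is absurd.
-/

open Finset
open scoped Classical

noncomputable section

namespace Schelling

variable {V A : Type*} [Fintype V] [Fintype A] {k : ℕ}

section Exchange

omit [Fintype V] [Fintype A]

lemma not_reachesStableSwap_of_invariant {c : (A → V) → A → ℝ} {p₀ : A → V}
    (I : (A → V) → Prop) (h₀ : I p₀) (hstep : ∀ p q, I p → ImprovingSwap c p q → I q)
    (hunstable : ∀ p, I p → ¬ SwapStable c p) : ¬ ReachesStableSwap c p₀ := by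
  rintro ⟨n, q, rfl, hq, hstable⟩
  have hI : ∀ i ≤ n, I (q i) := by
    intro i hi
    induction i with
    | zero => exact h₀
    | succ i ih => exact hstep _ _ (ih (by omega)) (hq i hi)
  exact hunstable _ (hI n le_rfl) hstable

/-- The node coloring after the agents on `u` and `v` have exchanged their places. -/
def exchange (c : V → Fin k) (u v : V) : V → Fin k :=
  c ∘ Equiv.swap u v

variable {c : V → Fin k} {u v w : V}

@[simp]
lemma exchange_left : exchange c u v u = c v := by simp [exchange]

@[simp]
lemma exchange_right : exchange c u v v = c u := by simp [exchange]

lemma exchange_of_ne (hu : w ≠ u) (hv : w ≠ v) : exchange c u v w = c w := by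
  simp [exchange, Equiv.swap_apply_of_ne_of_ne hu hv]

lemma exchange_comm : exchange c u v = exchange c v u := by
  simp [exchange, Equiv.swap_comm]

lemma comp_symm_swap_trans (t : A → Fin k) (f : A ≃ V) (a b : A) :
    t ∘ ((Equiv.swap a b).trans f).symm = exchange (t ∘ f.symm) (f a) (f b) := by
  funext v
  simp [exchange, ← Equiv.symm_trans_swap_trans]

end Exchange

section Coloring

variable {W : Type*} {G : SimpleGraph V} {H : SimpleGraph W} {τ : ℝ} {c : V → Fin k} {u v : V}

/-- The number of neighbors of `v` of color `T` in a node coloring `c`. -/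
def colorDegree (G : SimpleGraph V) (c : V → Fin k) (v : V) (T : Fin k) : ℕ :=
  #{w | G.Adj v w ∧ c w = T}

/-- The 1-1 cost of the agent located at the node `v`, where `c` is the coloring of the nodes by the
types of the agents on them. It is encoded by letting the nodes themselves be the agents. -/
def nodeCost (G : SimpleGraph V) (τ : ℝ) (c : V → Fin k) (v : V) : ℝ :=
  costOne G c τ id v

/-- An improving swap, seen on node colorings. -/
def ImprovingExchange (G : SimpleGraph V) (τ : ℝ) (c : V → Fin k) (u v : V) : Prop :=
  nodeCost G τ (exchange c u v) v < nodeCost G τ c u ∧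
    nodeCost G τ (exchange c u v) u < nodeCost G τ c v

lemma ImprovingExchange.symm (h : ImprovingExchange G τ c u v) : ImprovingExchange G τ c v u := by
  rw [ImprovingExchange, exchange_comm]
  exact And.symm h

lemma ImprovingExchange.ne (h : ImprovingExchange G τ c u v) : u ≠ v := by
  rintro rfl
  simp [ImprovingExchange, exchange] at h

omit [Fintype V] in
lemma costOne_eq_max (hτ : 0 ≤ τ) (t : A → Fin k) (p : A → V) (a : A) :
    costOne G t τ p a = max 0 (τ - (posCount G t p a : ℝ) /
      ((posCount G t p a : ℝ) + (negCountOne G t p a : ℝ))) := by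
  rw [costOne]
  split_ifs with h
  · have hpos : posCount G t p a = 0 := by
      rw [posCount, ← filter_filter]
      simp [show univ.filter (fun b => G.Adj (p a) (p b)) = ∅ from h]
    -- Without neighbors the quotient is `0 / 0 = 0`, which gives the right cost `τ`.
    simp [hpos, hτ]
  · rfl

lemma nodeCost_nonneg (hτ : 0 ≤ τ) : 0 ≤ nodeCost G τ c v := by
  rw [nodeCost, costOne_eq_max hτ]
  exact le_max_left _ _

lemma nodeCost_eq_of_colorDegree_le (hτ : 0 ≤ τ) {T : Fin k} (hT : T ≠ c v)
    (hmax : ∀ S ≠ c v, colorDegree G c v S ≤ colorDegree G c v T) :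
    nodeCost G τ c v = max 0 (τ - (colorDegree G c v (c v) : ℝ) /
      (colorDegree G c v (c v) + colorDegree G c v T)) := by
  have hneg : negCountOne G c id v = colorDegree G c v T :=
    le_antisymm (Finset.sup_le fun S hS => hmax S (by simpa using hS))
      (Finset.le_sup (f := colorDegree G c v) (by simpa using hT))
  rw [nodeCost, costOne_eq_max hτ, hneg]
  rfl

lemma nodeCost_eq_zero_of_colorDegree_le (hτ : 0 ≤ τ) {m : ℕ}
    (hmax : ∀ S ≠ c v, colorDegree G c v S ≤ m) (hpos : 0 < colorDegree G c v (c v))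
    (hm : τ * (colorDegree G c v (c v) + m) ≤ colorDegree G c v (c v)) :
    nodeCost G τ c v = 0 := by
  have hneg : (negCountOne G c id v : ℝ) ≤ m :=
    Nat.cast_le.2 (Finset.sup_le fun S hS => hmax S (by simpa using hS))
  have hratio : τ ≤ (colorDegree G c v (c v) : ℝ) /
      (colorDegree G c v (c v) + negCountOne G c id v) := by
    rw [le_div_iff₀ (by positivity)]
    exact (mul_le_mul_of_nonneg_left (by gcongr) hτ).trans hm
  rw [nodeCost, costOne_eq_max hτ]
  exact max_eq_left (sub_nonpos.2 hratio)

lemma costOne_eq_nodeCost (e : H ≃g G) (t : A → Fin k) (f : A ≃ V) (a : A) :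
    costOne H t τ (e.symm ∘ f) a = nodeCost G τ (t ∘ f.symm) (f a) := by
  have hnbrs : nbrs H (e.symm ∘ f) a = ∅ ↔ nbrs G id (f a) = ∅ := by
    simp [nbrs, filter_eq_empty_iff, e.symm.map_adj_iff, ← f.forall_congr_right]
  have hcard (T : Fin k) : #{b | H.Adj (e.symm (f a)) (e.symm (f b)) ∧ t b = T} =
      #{w | G.Adj (f a) w ∧ t (f.symm w) = T} :=
    card_equiv f fun b => by simp [e.symm.map_adj_iff]
  simp [nodeCost, costOne, hnbrs, posCount, negCountOne, hcard]

lemma swapMove_iff_improvingExchange (e : H ≃g G) (t : A → Fin k) (f : A ≃ V) (a b : A) :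
    SwapMove (costOne H t τ) (e.symm ∘ f) (e.symm ∘ (Equiv.swap a b).trans f) a b ↔
      ImprovingExchange G τ (t ∘ f.symm) (f a) (f b) := by
  have hmove : SwapMove (costOne H t τ) (e.symm ∘ f) (e.symm ∘ (Equiv.swap a b).trans f) a b ↔
      a ≠ b ∧ ImprovingExchange G τ (t ∘ f.symm) (f a) (f b) := by
    have hcomp : e.symm ∘ (Equiv.swap a b).trans f = (e.symm ∘ f) ∘ Equiv.swap a b := rfl
    simp only [SwapMove, ImprovingExchange, eq_true hcomp, true_and, costOne_eq_nodeCost,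
      comp_symm_swap_trans, Equiv.trans_apply, Equiv.swap_apply_left, Equiv.swap_apply_right]
  exact hmove.trans (and_iff_right_of_imp fun h => ne_of_apply_ne f h.ne)

theorem not_reachesStableSwap_of_coloring_invariant (e : H ≃g G) (t : A → Fin k) (f₀ : A ≃ V)
    (I : (V → Fin k) → Prop) (h₀ : I (t ∘ f₀.symm))
    (hstep : ∀ c u v, I c → ImprovingExchange G τ c u v → I (exchange c u v))
    (hunstable : ∀ c, I c → ∃ u v, ImprovingExchange G τ c u v) :
    ¬ ReachesStableSwap (costOne H t τ) (e.symm ∘ f₀) := by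
  refine not_reachesStableSwap_of_invariant
    (fun p => ∃ f : A ≃ V, p = e.symm ∘ f ∧ I (t ∘ f.symm)) ⟨f₀, rfl, h₀⟩ ?_ ?_
  · rintro _ _ ⟨f, rfl, hf⟩ ⟨a, b, hmove⟩
    obtain rfl := hmove.2.1
    refine ⟨(Equiv.swap a b).trans f, rfl, ?_⟩
    rw [comp_symm_swap_trans]
    exact hstep _ _ _ hf ((swapMove_iff_improvingExchange e t f a b).1 hmove)
  · rintro _ ⟨f, rfl, hf⟩ hstable
    obtain ⟨u, v, huv⟩ := hunstable _ hf
    refine hstable _ ⟨f.symm u, f.symm v, (swapMove_iff_improvingExchange e t f _ _).2 ?_⟩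
    simpa only [Equiv.apply_symm_apply] using huv

end Coloring

section Arithmetic

lemma div_add_lt_div_add_iff {x y r : ℝ} (hx : 0 ≤ x) (hy : 0 ≤ y) (hr : 0 < r) :
    x / (x + r) < y / (y + r) ↔ x < y := by
  rw [div_lt_div_iff₀ (by positivity) (by positivity), mul_add, mul_add, mul_comm x y,
    add_lt_add_iff_left, mul_lt_mul_iff_left₀ hr]

lemma pos_of_three_le_mul {b : ℕ} {x : ℝ} (h : 3 ≤ b * x) : 0 < x :=
  pos_of_mul_pos_right (by linarith) b.cast_nonneg

lemma exists_nat_three_le_mul {τ : ℝ} (hτ₀ : 0 < τ) (hτ₁ : τ < 1) :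
    ∃ b : ℕ, 3 ≤ b * τ ∧ 3 ≤ b * (1 - τ) := by
  obtain ⟨b, hb⟩ := exists_nat_ge (max (3 / τ) (3 / (1 - τ)))
  exact ⟨b, (div_le_iff₀ hτ₀).1 ((le_max_left _ _).trans hb),
    (div_le_iff₀ (sub_pos.2 hτ₁)).1 ((le_max_right _ _).trans hb)⟩

lemma eq_of_ne_zero_of_ne {p q r : Fin 3} (hp : p ≠ 0) (hq : q ≠ 0) (hr : r ≠ 0) (hpr : p ≠ r)
    (hqr : q ≠ r) : p = q := by
  omega

lemma exists_eq_sub_one {f : Fin 3 → Fin 3} (hf : ∀ i, f i ≠ 0) : ∃ i, f (i - 1) = f i := by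
  revert f
  decide

end Arithmetic

section Gadget

/-- The two nodes of a pair: the scores of the outer node range wider than those of the inner
node. -/
inductive Slot
  | outer
  | inner
  deriving DecidableEq

instance : Fintype Slot :=
  ⟨{.outer, .inner}, fun s => by cases s <;> simp⟩

/-- The mobile nodes: the slots of the three pairs. -/
abbrev Site := Fin 3 × Slot

/-- The nodes of the gadget: the mobile nodes and, for each type, `3 * b` static nodes. -/
abbrev Node (b : ℕ) := Site ⊕ (Fin 3 × Fin (3 * b))

/-- The only mobile neighbor of a mobile node. -/
def mate : Site → Site
  | (i, .outer) => (i - 1, .inner)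
  | (i, .inner) => (i + 1, .outer)

/-- The unit in which the static neighbors of a mobile node are counted. -/
def weight : Site → ℕ
  | (_, .outer) => 1
  | (_, .inner) => 3

/-- The number of static neighbors of a mobile node of each of the types `1` and `2`. -/
def friends : Site → ℕ
  | (i, .outer) => i
  | (i, .inner) => 3 * i + 1

/-- The number of static neighbors of type `T` of a mobile node. -/
def staticDegree (b : ℕ) (u : Site) (T : Fin 3) : ℕ :=
  if T = 0 then weight u * b else friends u

lemma mate_mate (u : Site) : mate (mate u) = u := by
  obtain ⟨i, _ | _⟩ := u <;> simp [mate]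

lemma mate_fst_ne (u : Site) : (mate u).1 ≠ u.1 := by
  obtain ⟨i, _ | _⟩ := u <;> simp [mate]

lemma weight_pos (u : Site) : 0 < weight u := by
  obtain ⟨i, _ | _⟩ := u <;> simp [weight]

lemma weight_le_three (u : Site) : weight u ≤ 3 := by
  obtain ⟨i, _ | _⟩ := u <;> simp [weight]

lemma fst_mul_weight_le_friends (u : Site) : u.1 * weight u ≤ friends u := by
  obtain ⟨i, _ | _⟩ := u <;> simp only [weight, friends] <;> omega

lemma friends_lt_succ_fst_mul_weight (u : Site) : friends u < (u.1 + 1) * weight u := by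
  obtain ⟨i, _ | _⟩ := u <;> simp only [weight, friends] <;> omega

lemma friends_lt_weight_mul {b : ℕ} (hb : 3 ≤ b) (u : Site) : friends u < weight u * b := by
  calc friends u < (u.1 + 1) * weight u := friends_lt_succ_fst_mul_weight u
    _ ≤ b * weight u := by gcongr; omega
    _ = weight u * b := mul_comm _ _

lemma staticDegree_le {b : ℕ} (hb : 3 ≤ b) (u : Site) (T : Fin 3) :
    staticDegree b u T ≤ 3 * b := by
  have hweight : weight u * b ≤ 3 * b := by gcongr; exact weight_le_three u
  unfold staticDegree
  split_ifs
  · exact hweight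
  · exact (friends_lt_weight_mul hb u).le.trans hweight

/-- The graph of the counterexample: mates are adjacent, the static nodes of each type form a
clique, and the `m`-th static node of type `T` is adjacent to the mobile nodes with more than `m`
static neighbors of type `T`. -/
def gadget (b : ℕ) : SimpleGraph (Node b) where
  Adj
    | .inl u, .inl v => v = mate u
    | .inl u, .inr x => x.2 < staticDegree b u x.1
    | .inr x, .inl u => x.2 < staticDegree b u x.1
    | .inr x, .inr y => x.1 = y.1 ∧ x.2 ≠ y.2
  symm.symm := by
    rintro (u | x) (v | y) h
    · exact (mate_mate u).symm.trans (congrArg mate h.symm)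
    · exact h
    · exact h
    · exact ⟨h.1.symm, h.2.symm⟩
  loopless.irrefl := by
    rintro (u | x) h
    · exact mate_fst_ne u (congrArg Prod.fst h.symm)
    · exact h.2 rfl

variable {b : ℕ} {τ : ℝ} {c c' : Node b → Fin 3} {u v : Site}
  {x y : Fin 3 × Fin (3 * b)} {i : Fin 3}

/-- The ratio of the same-type neighbors to the type `0` neighbors of a mobile node, multiplied by
`b`. -/
def score (c : Node b → Fin 3) (u : Site) : ℝ :=
  (friends u + if c (.inl (mate u)) = c (.inl u) then 1 else 0) / weight u

/-- The static nodes carry agents of their own type and the mobile nodes agents of the types `1`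
and `2`. -/
structure IsLayout (c : Node b → Fin 3) : Prop where
  static (x : Fin 3 × Fin (3 * b)) : c (.inr x) = x.1
  mobile (u : Site) : c (.inl u) ≠ 0

/-- A layout in which each pair carries one agent of each of the types `1` and `2`: the invariant of
the improving swaps. -/
structure IsPaired (c : Node b → Fin 3) : Prop extends IsLayout c where
  outer_ne_inner (i : Fin 3) : c (.inl (i, .outer)) ≠ c (.inl (i, .inner))

lemma IsLayout.exchange (hc : IsLayout c) (u v : Site) :
    IsLayout (exchange c (.inl u) (.inl v)) where
  static x := by rw [exchange_of_ne (by simp) (by simp), hc.static]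
  mobile w := by
    simp only [Schelling.exchange, Function.comp_apply, Equiv.swap_apply_def]
    split_ifs <;> exact hc.mobile _

lemma IsPaired.exchange_of_fst_eq (hc : IsPaired c) (h : u.1 = v.1) :
    IsPaired (exchange c (.inl u) (.inl v)) where
  toIsLayout := hc.toIsLayout.exchange u v
  outer_ne_inner j := by
    obtain ⟨i, s⟩ := u
    obtain ⟨_, s'⟩ := v
    obtain rfl : i = _ := h
    by_cases hj : j = i
    · subst hj
      have hne := hc.outer_ne_inner j
      rcases s with _ | _ <;> rcases s' with _ | _ <;>
        simp [Schelling.exchange, hne, hne.symm]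
    · rw [exchange_of_ne (by simp [hj]) (by simp [hj]),
        exchange_of_ne (by simp [hj]) (by simp [hj])]
      exact hc.outer_ne_inner j

lemma gadget_adj_mobile_mobile : (gadget b).Adj (.inl u) (.inl v) ↔ v = mate u := Iff.rfl

lemma gadget_adj_mobile_static :
    (gadget b).Adj (.inl u) (.inr x) ↔ x.2 < staticDegree b u x.1 := Iff.rfl

lemma gadget_adj_static_static :
    (gadget b).Adj (.inr x) (.inr y) ↔ x.1 = y.1 ∧ x.2 ≠ y.2 := Iff.rfl

lemma colorDegree_mobile (hb : 3 ≤ b) (hc : ∀ x, c (.inr x) = x.1) (u : Site) (T : Fin 3) :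
    colorDegree (gadget b) c (.inl u) T =
      staticDegree b u T + if c (.inl (mate u)) = T then 1 else 0 := by
  have hstatic : #{m : Fin (3 * b) | m < staticDegree b u T} = staticDegree b u T := by
    rw [Fin.card_filter_val_lt, min_eq_right (staticDegree_le hb u T)]
  rw [colorDegree, card_filter, Fintype.sum_sum_type, add_comm]
  simp only [gadget_adj_mobile_mobile, gadget_adj_mobile_static, hc, ite_and]
  congr 1
  · rw [Fintype.sum_prod_type, Fintype.sum_eq_single T]
    · simp [hstatic]
    · intro S hS
      simp [hS]
  · rw [sum_ite_eq' _ (mate u) fun v => if c (.inl v) = T then 1 else 0, if_pos (mem_univ _)]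

lemma le_colorDegree_static_self (hc : ∀ x, c (.inr x) = x.1) (x : Fin 3 × Fin (3 * b)) :
    3 * b - 1 ≤ colorDegree (gadget b) c (.inr x) x.1 := by
  calc 3 * b - 1 = #(univ.erase x.2) := by simp
    _ ≤ colorDegree (gadget b) c (.inr x) x.1 := by
      refine card_le_card_of_injOn (fun m => .inr (x.1, m)) (fun m hm => ?_) (fun _ _ _ _ h => ?_)
      · simpa [gadget_adj_static_static, hc, eq_comm] using hm
      · simpa using h

lemma colorDegree_static_le (hc : ∀ x, c (.inr x) = x.1) (x : Fin 3 × Fin (3 * b)) {T : Fin 3}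
    (hT : T ≠ x.1) : colorDegree (gadget b) c (.inr x) T ≤ 6 := by
  have hsub : ({w | (gadget b).Adj (.inr x) w ∧ c w = T} : Finset (Node b)) ⊆
      univ.map ⟨Sum.inl, Sum.inl_injective⟩ := by
    rintro (u | y) hy
    · simp
    · simp only [mem_filter_univ, gadget_adj_static_static, hc] at hy
      exact absurd (hy.2.symm.trans hy.1.1.symm) hT
  calc colorDegree (gadget b) c (.inr x) T ≤ _ := card_le_card hsub
    _ = Fintype.card Site := card_map _
    _ = 6 := rfl

lemma nodeCost_static (hbτ : 3 ≤ b * τ) (hbτ' : 3 ≤ b * (1 - τ)) (hc : ∀ x, c (.inr x) = x.1)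
    (x : Fin 3 × Fin (3 * b)) : nodeCost (gadget b) τ c (.inr x) = 0 := by
  have hτ := pos_of_three_le_mul hbτ
  have hself : 3 * (b : ℝ) - 1 ≤ colorDegree (gadget b) c (.inr x) (c (.inr x)) := by
    rw [hc, sub_le_iff_le_add]
    exact_mod_cast Nat.sub_le_iff_le_add.1 (le_colorDegree_static_self hc x)
  refine nodeCost_eq_zero_of_colorDegree_le hτ.le (m := 6)
    (fun S hS => colorDegree_static_le hc x (by simpa [hc] using hS)) ?_ ?_
  · rify
    linarith
  · push_cast
    nlinarith

lemma nodeCost_mobile_eq_max (hτ : 0 ≤ τ) (hb : 3 ≤ b) (hc : IsLayout c) (u : Site) :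
    nodeCost (gadget b) τ c (.inl u) = max 0 (τ - score c u / (score c u + b)) := by
  have hweight : (0 : ℝ) < weight u := Nat.cast_pos.2 (weight_pos u)
  have hfriends := friends_lt_weight_mul hb u
  have hdegree (S : Fin 3) := colorDegree_mobile hb hc.static u S
  have hself : (colorDegree (gadget b) c (.inl u) (c (.inl u)) : ℝ) = weight u * score c u := by
    rw [hdegree, staticDegree, if_neg (hc.mobile u), score, mul_div_cancel₀ _ hweight.ne']
    push_cast
    rfl
  have hzero : colorDegree (gadget b) c (.inl u) 0 = weight u * b := by
    simp [hdegree, staticDegree, hc.mobile]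
  rw [nodeCost_eq_of_colorDegree_le hτ (hc.mobile u).symm, hself, hzero]
  · push_cast
    rw [← mul_add, mul_div_mul_left _ _ hweight.ne']
  · intro S hS
    rw [hzero, hdegree, staticDegree]
    rcases eq_or_ne S 0 with rfl | hS₀
    · simp [hc.mobile]
    · rw [if_neg hS₀]
      split_ifs <;> omega

lemma le_score (c : Node b → Fin 3) (u : Site) : (u.1 : ℝ) ≤ score c u := by
  have hfriends := fst_mul_weight_le_friends u
  rw [score, le_div_iff₀ (Nat.cast_pos.2 (weight_pos u))]
  rify at hfriends
  split_ifs <;> linarith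

lemma score_le (c : Node b → Fin 3) (u : Site) : score c u ≤ u.1 + 1 := by
  have hfriends : friends u + 1 ≤ (u.1 + 1) * weight u := friends_lt_succ_fst_mul_weight u
  rw [score, div_le_iff₀ (Nat.cast_pos.2 (weight_pos u))]
  rify at hfriends
  split_ifs <;> linarith

lemma score_nonneg (c : Node b → Fin 3) (u : Site) : 0 ≤ score c u :=
  (Nat.cast_nonneg _).trans (le_score c u)

lemma score_le_three (c : Node b → Fin 3) (u : Site) : score c u ≤ 3 := by
  have hfst : (u.1 : ℝ) ≤ 2 := by exact_mod_cast Fin.is_le u.1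
  linarith [score_le c u]

lemma nodeCost_mobile (hbτ : 3 ≤ b * τ) (hτ : τ ≤ 1) (hc : IsLayout c) (u : Site) :
    nodeCost (gadget b) τ c (.inl u) = τ - score c u / (score c u + b) := by
  have hb : (3 : ℝ) ≤ b := hbτ.trans (mul_le_of_le_one_right b.cast_nonneg hτ)
  rw [nodeCost_mobile_eq_max (pos_of_three_le_mul hbτ).le (by exact_mod_cast hb) hc, max_eq_right]
  have hscore := score_nonneg c u
  rw [sub_nonneg, div_le_iff₀ (by positivity)]
  nlinarith [score_le_three c u]

lemma nodeCost_mobile_lt_iff (hbτ : 3 ≤ b * τ) (hτ : τ ≤ 1) (hc : IsLayout c)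
    (hc' : IsLayout c') (u v : Site) :
    nodeCost (gadget b) τ c (.inl u) < nodeCost (gadget b) τ c' (.inl v) ↔
      score c' v < score c u := by
  have hb : (0 : ℝ) < b := by nlinarith
  rw [nodeCost_mobile hbτ hτ hc, nodeCost_mobile hbτ hτ hc', sub_lt_sub_iff_left,
    div_add_lt_div_add_iff (score_nonneg _ _) (score_nonneg _ _) hb]

lemma improvingExchange_mobile_iff (hbτ : 3 ≤ b * τ) (hτ : τ ≤ 1) (hc : IsLayout c)
    (u v : Site) : ImprovingExchange (gadget b) τ c (.inl u) (.inl v) ↔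
      score c u < score (exchange c (.inl u) (.inl v)) v ∧
        score c v < score (exchange c (.inl u) (.inl v)) u :=
  and_congr (nodeCost_mobile_lt_iff hbτ hτ (hc.exchange u v) hc v u)
    (nodeCost_mobile_lt_iff hbτ hτ (hc.exchange u v) hc u v)

lemma le_fst_of_score_lt (h : score c u < score c' v) : u.1 ≤ v.1 := by
  have hlt : (u.1 : ℝ) < v.1 + 1 := (le_score c u).trans_lt (h.trans_le (score_le c' v))
  exact Nat.lt_succ_iff.1 (by exact_mod_cast hlt)

lemma not_improvingExchange_static (hbτ : 3 ≤ b * τ) (hbτ' : 3 ≤ b * (1 - τ))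
    (hc : ∀ x, c (.inr x) = x.1) (x : Fin 3 × Fin (3 * b)) (w : Node b) :
    ¬ ImprovingExchange (gadget b) τ c (.inr x) w := by
  have hτ := pos_of_three_le_mul hbτ
  intro h
  exact (h.1.trans_eq (nodeCost_static hbτ hbτ' hc x)).not_ge (nodeCost_nonneg hτ.le)

lemma IsPaired.exchange_of_improvingExchange (hbτ : 3 ≤ b * τ) (hbτ' : 3 ≤ b * (1 - τ))
    (hc : IsPaired c) {w z : Node b} (h : ImprovingExchange (gadget b) τ c w z) :
    IsPaired (exchange c w z) := by
  obtain u | x := w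
  · obtain v | y := z
    · have hτ : τ ≤ 1 := (sub_pos.1 (pos_of_three_le_mul hbτ')).le
      have hscore := (improvingExchange_mobile_iff hbτ hτ hc.toIsLayout u v).1 h
      exact hc.exchange_of_fst_eq
        ((le_fst_of_score_lt hscore.1).antisymm (le_fst_of_score_lt hscore.2))
    · exact (not_improvingExchange_static hbτ hbτ' hc.static y _ h.symm).elim
  · exact (not_improvingExchange_static hbτ hbτ' hc.static x _ h).elim

lemma IsPaired.exists_unmatched (hc : IsPaired c) :
    ∃ i, c (.inl (i - 1, .inner)) ≠ c (.inl (i, .outer)) := by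
  obtain ⟨i, hi⟩ := exists_eq_sub_one fun i => hc.mobile (i, .outer)
  exact ⟨i, fun h => hc.outer_ne_inner (i - 1) (hi.trans h.symm)⟩

lemma score_outer_of_ne (h : c (.inl (i - 1, .inner)) ≠ c (.inl (i, .outer))) :
    score c (i, .outer) = i := by
  simp [score, mate, friends, weight, h]

lemma score_outer_of_eq (h : c (.inl (i - 1, .inner)) = c (.inl (i, .outer))) :
    score c (i, .outer) = i + 1 := by
  simp [score, mate, friends, weight, h]

lemma lt_score_inner (c : Node b → Fin 3) (i : Fin 3) : i < score c (i, .inner) := by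
  rw [score]
  split_ifs <;> simp only [friends, weight] <;> push_cast <;> linarith

lemma score_inner_lt (c : Node b → Fin 3) (i : Fin 3) : score c (i, .inner) < i + 1 := by
  rw [score]
  split_ifs <;> simp only [friends, weight] <;> push_cast <;> linarith

lemma IsPaired.improvingExchange_of_unmatched (hbτ : 3 ≤ b * τ) (hτ : τ ≤ 1) (hc : IsPaired c)
    (h : c (.inl (i - 1, .inner)) ≠ c (.inl (i, .outer))) :
    ImprovingExchange (gadget b) τ c (.inl (i, .outer)) (.inl (i, .inner)) := by
  rw [improvingExchange_mobile_iff hbτ hτ hc.toIsLayout]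
  set c' := exchange c (.inl (i, .outer)) (.inl (i, .inner))
  have hmatched : c' (.inl (i - 1, .inner)) = c' (.inl (i, .outer)) := by
    simp only [c', exchange_left]
    rw [exchange_of_ne (by simp) (by simp)]
    exact eq_of_ne_zero_of_ne (hc.mobile _) (hc.mobile _) (hc.mobile _) h (hc.outer_ne_inner i).symm
  rw [score_outer_of_ne h, score_outer_of_eq hmatched]
  exact ⟨lt_score_inner c' i, score_inner_lt c i⟩

/-- The initial layout, with type `1` on the outer and type `2` on the inner mobile nodes. -/
def initialLayout (b : ℕ) : Node b → Fin 3
  | .inl (_, .outer) => 1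
  | .inl (_, .inner) => 2
  | .inr x => x.1

lemma isPaired_initialLayout (b : ℕ) : IsPaired (initialLayout b) where
  static _ := rfl
  mobile u := by obtain ⟨_, _ | _⟩ := u <;> simp [initialLayout]
  outer_ne_inner _ := by simp [initialLayout]

lemma initialLayout_surjective (hb : 0 < b) : Function.Surjective (initialLayout b) :=
  fun T => ⟨.inr (T, ⟨0, by omega⟩), rfl⟩

end Gadget

/-- For every `τ ∈ (0,1)` there are a graph, three surjectively used agent types on
`|A| = |V|` agents and a bijective placement `p₀` from which no finite sequence of
improving swaps of the `1`-`1`-SSG reaches a swap-stable placement, i.e., the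
`1`-`1`-SSG is not weakly acyclic on arbitrary networks. -/
theorem statement5 (τ : ℝ) (hτ0 : 0 < τ) (hτ1 : τ < 1) :
    ∃ (N : ℕ) (G : SimpleGraph (Fin N)) (t : Fin N → Fin 3) (p₀ : Fin N → Fin N),
      Function.Surjective t ∧ Function.Bijective p₀ ∧
      ¬ ReachesStableSwap (costOne G t τ) p₀ := by
  obtain ⟨b, hbτ, hbτ'⟩ := exists_nat_three_le_mul hτ0 hτ1
  have hb : 0 < b := Nat.pos_of_ne_zero fun hb => by norm_num [hb] at hbτ
  let e : Fin (Fintype.card (Node b)) ≃ Node b := (Fintype.equivFin (Node b)).symm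
  let φ : (gadget b).comap e ≃g gadget b := SimpleGraph.Iso.comap e (gadget b)
  refine ⟨_, (gadget b).comap e, initialLayout b ∘ e, φ.symm ∘ e,
    (initialLayout_surjective hb).comp e.surjective, φ.symm.bijective.comp e.bijective, ?_⟩
  refine not_reachesStableSwap_of_coloring_invariant φ _ e IsPaired ?_ ?_ ?_
  · simpa [Function.comp_assoc] using isPaired_initialLayout b
  · intro c w z hc h
    exact hc.exchange_of_improvingExchange hbτ hbτ' h
  · intro c hc
    obtain ⟨i, hi⟩ := hc.exists_unmatched
    exact ⟨_, _, hc.improvingExchange_of_unmatched hbτ hτ1.le hi⟩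

end Schelling
end
end
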